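/- For every leader's decision x = (x₁, x₂) in the box [x̲₁, x̄₁] × [x̲₂, x̄₂], the point y ∈ ℝ^{n+2} defined by y_i = i / 2^{2^n} for i = 1, …, n−1, y_n = 1/2 − 1/2^{2^n}, y_{n+1} = 1/2, and y_{n+2} = 0 belongs to Ω(x) and satisfies every inequality constraint of Ω(x) strictly: y_i² < y_{i+1} for i = 1, …, n−1; y_i > 0 for i = 1, …, n; 0 < y_{n+1} < x₁; and −x₂ < y_{n+2} < x₂. In particular, for every such x the lower-level problem satisfies Slater's constraint qualification. -/

import Mathlib

/-!
Write `N = 2 ^ 2 ^ n`. Every constraint reduces to the single estimate `4 n ≤ N`, valid for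
`n ≥ 2` because `n + 2 ≤ 2 ^ n` and `n < 2 ^ n`, together with `N ≥ 16`.
For `i ≤ n - 2` the inequality `yᵢ² < yᵢ₊₁` says `i² < (i + 1) N`, which follows from `i < N`.
For `i = n - 1` it says `((n - 1) / N)² < 1/2 - 1/N`: the left side is at most `1/16`
and the right side at least `7/16`. The feasibility of the point follows from the strict
inequalities and the equation `1/N + (1/2 - 1/N) = 1/2`.
-/

/-- The lower-level feasible set `Ω(x)` of the bilevel example: points
`y ∈ ℝ^{n+2}` (0-indexed: Lean index `j` corresponds to math index `j+1`) with
`y₁ + yₙ = 1/2`, `yᵢ² ≤ yᵢ₊₁` for `i = 1,…,n−1`, `yᵢ ≥ 0` for `i = 1,…,n`,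
`0 ≤ y_{n+1} ≤ x₁`, and `−x₂ ≤ y_{n+2} ≤ x₂`. -/
def Omega (n : ℕ) (x1 x2 : ℝ) : Set (Fin (n + 2) → ℝ) :=
  {y | y ⟨0, by omega⟩ + y ⟨n - 1, by omega⟩ = 1 / 2 ∧
    (∀ i : ℕ, ∀ _h1 : 1 ≤ i, ∀ _h2 : i ≤ n - 1,
      (y ⟨i - 1, by omega⟩) ^ 2 ≤ y ⟨i, by omega⟩) ∧
    (∀ i : ℕ, ∀ _h1 : 1 ≤ i, ∀ _h2 : i ≤ n, 0 ≤ y ⟨i - 1, by omega⟩) ∧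
    0 ≤ y ⟨n, by omega⟩ ∧ y ⟨n, by omega⟩ ≤ x1 ∧
    -x2 ≤ y ⟨n + 1, by omega⟩ ∧ y ⟨n + 1, by omega⟩ ≤ x2}

/-- The Slater point: `yᵢ = i / 2^(2^n)` for `i = 1,…,n−1`,
`yₙ = 1/2 − 1/2^(2^n)`, `y_{n+1} = 1/2`, `y_{n+2} = 0`
(Lean index `j` corresponds to math index `j+1`). -/
noncomputable def slaterPoint (n : ℕ) : Fin (n + 2) → ℝ := fun j =>
  if (j : ℕ) + 1 ≤ n - 1 then ((j : ℕ) + 1 : ℝ) / 2 ^ 2 ^ n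
  else if (j : ℕ) + 1 = n then 1 / 2 - 1 / 2 ^ 2 ^ n
  else if (j : ℕ) + 1 = n + 1 then 1 / 2
  else 0

theorem add_two_le_two_pow (n : ℕ) (hn : 2 ≤ n) : n + 2 ≤ 2 ^ n := by
  induction n, hn using Nat.le_induction with
  | base => norm_num
  | succ k hk ih => rw [pow_succ]; omega

theorem four_mul_le_two_pow_two_pow (n : ℕ) (hn : 2 ≤ n) :
    4 * (n : ℝ) ≤ 2 ^ 2 ^ n ∧ (16 : ℝ) ≤ 2 ^ 2 ^ n := by
  have h : 2 ^ (n + 2) ≤ 2 ^ 2 ^ n :=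
    Nat.pow_le_pow_right (by norm_num) (add_two_le_two_pow n hn)
  have h1 : n + 2 ≤ 2 ^ n := add_two_le_two_pow n hn
  rw [pow_add] at h
  constructor
  · exact_mod_cast (by omega : 4 * n ≤ 2 ^ 2 ^ n)
  · exact_mod_cast (by omega : 16 ≤ 2 ^ 2 ^ n)

theorem slaterPoint_low (n i : ℕ) (h1 : 1 ≤ i) (h2 : i ≤ n - 1) (h : i - 1 < n + 2) :
    slaterPoint n ⟨i - 1, h⟩ = (i : ℝ) / 2 ^ 2 ^ n := by
  obtain ⟨k, rfl⟩ : ∃ k, i = k + 1 := ⟨i - 1, by omega⟩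
  simp [slaterPoint, h2]

theorem slaterPoint_mid (n : ℕ) (hn : 2 ≤ n) (h : n - 1 < n + 2) :
    slaterPoint n ⟨n - 1, h⟩ = 1 / 2 - 1 / 2 ^ 2 ^ n := by
  have a : ¬ (n - 1 + 1 ≤ n - 1) := by omega
  have b : n - 1 + 1 = n := by omega
  simp only [slaterPoint]
  rw [if_neg a, if_pos b]

theorem slaterPoint_n (n : ℕ) (h : n < n + 2) : slaterPoint n ⟨n, h⟩ = 1 / 2 := by
  have a : ¬ (n + 1 ≤ n - 1) := by omega
  simp [slaterPoint, a]

theorem slaterPoint_last (n : ℕ) (h : n + 1 < n + 2) : slaterPoint n ⟨n + 1, h⟩ = 0 := by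
  have a : ¬ (n + 1 + 1 ≤ n - 1) := by omega
  have b : ¬ (n + 1 + 1 = n) := by omega
  simp [slaterPoint, a, b]

theorem slaterPoint_sq_lt (n : ℕ) (hn : 2 ≤ n) (i : ℕ) (h1 : 1 ≤ i) (h2 : i ≤ n - 1)
    (h : i - 1 < n + 2) (h' : i < n + 2) :
    (slaterPoint n ⟨i - 1, h⟩) ^ 2 < slaterPoint n ⟨i, h'⟩ := by
  obtain ⟨hN, hN16⟩ := four_mul_le_two_pow_two_pow n hn
  rw [slaterPoint_low n i h1 h2]
  have hin : (i : ℝ) ≤ n := by exact_mod_cast (by omega : i ≤ n)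
  have hi0 : (0 : ℝ) ≤ i := Nat.cast_nonneg i
  have hpos : (0 : ℝ) < 2 ^ 2 ^ n := by positivity
  have hq : (i : ℝ) / 2 ^ 2 ^ n ≤ 1 / 4 := by
    rw [div_le_iff₀ hpos]; linarith
  have hq0 : 0 ≤ (i : ℝ) / 2 ^ 2 ^ n := by positivity
  rcases Nat.lt_or_ge i (n - 1) with hlt | hge
  · have e := slaterPoint_low n (i + 1) (by omega) (by omega) h'
    simp only [Nat.add_sub_cancel] at e
    rw [e]
    have hs : (i : ℝ) / 2 ^ 2 ^ n < ((i + 1 : ℕ) : ℝ) / 2 ^ 2 ^ n := by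
      push_cast
      gcongr
      linarith
    nlinarith
  · obtain rfl : i = n - 1 := by omega
    rw [slaterPoint_mid n hn]
    have : (1 : ℝ) / 2 ^ 2 ^ n ≤ 1 / 16 := by gcongr
    nlinarith

theorem slaterPoint_pos (n : ℕ) (hn : 2 ≤ n) (i : ℕ) (h1 : 1 ≤ i) (h2 : i ≤ n)
    (h : i - 1 < n + 2) : 0 < slaterPoint n ⟨i - 1, h⟩ := by
  rcases Nat.lt_or_ge i n with hlt | hge
  · rw [slaterPoint_low n i h1 (by omega)]
    have : (0 : ℝ) < i := by exact_mod_cast h1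
    positivity
  · obtain rfl : i = n := by omega
    rw [slaterPoint_mid i hn]
    have : (1 : ℝ) / 2 ^ 2 ^ i ≤ 1 / 16 := by
      have := (four_mul_le_two_pow_two_pow i hn).2
      gcongr
    linarith

/-- For every leader's decision `x` in the box, the explicit point
`slaterPoint n` belongs to `Ω(x)` and satisfies all inequality constraints
of `Ω(x)` strictly; in particular, the lower-level problem satisfies
Slater's constraint qualification. -/
theorem stmt1 (n : ℕ) (hn : 2 ≤ n)
    (xl1 xl2 xu1 xu2 : ℝ) (hl1 : 1 ≤ xl1) (hl2 : 1 ≤ xl2)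
    (hu1 : xl1 < xu1) (hu2 : xl2 < xu2)
    (x1 x2 : ℝ) (hx1 : x1 ∈ Set.Icc xl1 xu1) (hx2 : x2 ∈ Set.Icc xl2 xu2) :
    slaterPoint n ∈ Omega n x1 x2 ∧
    (∀ i : ℕ, ∀ _h1 : 1 ≤ i, ∀ _h2 : i ≤ n - 1,
      (slaterPoint n ⟨i - 1, by omega⟩) ^ 2 < slaterPoint n ⟨i, by omega⟩) ∧
    (∀ i : ℕ, ∀ _h1 : 1 ≤ i, ∀ _h2 : i ≤ n, 0 < slaterPoint n ⟨i - 1, by omega⟩) ∧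
    0 < slaterPoint n ⟨n, by omega⟩ ∧ slaterPoint n ⟨n, by omega⟩ < x1 ∧
    -x2 < slaterPoint n ⟨n + 1, by omega⟩ ∧ slaterPoint n ⟨n + 1, by omega⟩ < x2 := by
  have hsq := slaterPoint_sq_lt n hn
  have hpos := slaterPoint_pos n hn
  have e0 : slaterPoint n ⟨0, by omega⟩ = 1 / 2 ^ 2 ^ n := by
    simpa using slaterPoint_low n 1 le_rfl (by omega) (by omega)
  have em := slaterPoint_mid n hn (by omega)
  have en := slaterPoint_n n (by omega)
  have el := slaterPoint_last n (by omega)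
  have hx1 := hx1.1
  have hx2 := hx2.1
  refine ⟨⟨?_, fun i h1 h2 => (hsq i h1 h2 _ _).le, fun i h1 h2 => (hpos i h1 h2 _).le,
    ?_, ?_, ?_, ?_⟩, fun i h1 h2 => hsq i h1 h2 _ _, fun i h1 h2 => hpos i h1 h2 _,
    ?_, ?_, ?_, ?_⟩
  · rw [e0, em]; ring
  all_goals first | rw [en] | rw [el]
  all_goals linarith
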